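/- arXiv:1511.01128 — 4 statements merged into one kernel-verified Lean document; each statement's English description precedes it below -/
import Mathlib

section
/- Let (R_0, R_1, ..., R_ℓ, R_{ℓ+1}=0) be the subresultant PRS of A and B, and assume it is normal, i.e. d_{i-1} = d_i + 1 for all 1 ≤ i ≤ ℓ. Let G be a primitive greatest common divisor of A and B in D[x]. Then for every i with 2 ≤ i ≤ ℓ, the power lc(G)^{2(i-1)} divides the content cont(R_i). -/
open Polynomial

/-!
In a normal subresultant PRS one has `α i = lc (R i) ^ 2`, `β 1 = 1` and
`β i = lc (R (i - 1)) ^ 2` for `2 ≤ i`. Reading the recursion as row operations on Sylvester-type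
matrices, these scalars are exactly the ones that cancel, and `R (n + 1)` is the determinantal
polynomial of the rows `X ^ r * A` (`r < n`), `X ^ r * B` (`r < n + 1`).

If `A = G * a` and `B = G * b`, the determinantal matrix of these `2 * n + 1` rows is the one for
`a` and `b` times a triangular matrix which has `G` once and `lc G` `2 * n` times on its diagonal.
So `lc G ^ (2 * n) * G` divides `R (n + 1)`.
-/

section Coeff

variable {R : Type*} [CommSemiring R]

theorem natDegree_right_le_of_natDegree_mul_le [NoZeroDivisors R] {p q : R[X]} {n : ℕ}
    (hp : p ≠ 0) (h : (p * q).natDegree ≤ p.natDegree + n) : q.natDegree ≤ n := by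
  rcases eq_or_ne q 0 with rfl | hq
  · simp
  · rw [natDegree_mul hp hq] at h
    lia

theorem coeff_mul_eq_sum_range {G f : R[X]} {g L n j : ℕ} (hG : G.natDegree ≤ g)
    (hf : f.natDegree < L + n) (hj : j ≠ 0) :
    (G * f).coeff (L + g + j) =
      ∑ m ∈ Finset.range n, f.coeff (L + m) * (X ^ m * G).coeff (g + j) := by
  have hsum : (G * f).coeff (L + g + j) =
      ∑ k ∈ Finset.range (L + n), f.coeff k * (X ^ k * G).coeff (L + g + j) := by
    conv_lhs => rw [f.as_sum_range_C_mul_X_pow' hf, Finset.mul_sum, finsetSum_coeff]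
    refine Finset.sum_congr rfl fun k _ ↦ ?_
    rw [mul_left_comm, coeff_C_mul, mul_comm G]
  have hlow : ∀ k ∈ Finset.range L, f.coeff k * (X ^ k * G).coeff (L + g + j) = 0 := by
    intro k hk
    rw [Finset.mem_range] at hk
    rw [coeff_X_pow_mul', if_pos (by lia), coeff_eq_zero_of_natDegree_lt (p := G) (by lia),
      mul_zero]
  rw [hsum, Finset.sum_range_add, Finset.sum_eq_zero hlow, zero_add]
  refine Finset.sum_congr rfl fun m _ ↦ ?_
  rw [pow_add, mul_assoc, add_assoc, add_comm L (g + j), coeff_X_pow_mul]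

end Coeff

section DetPoly

variable {R S : Type*} [CommRing R] [CommRing S] {N : ℕ}

/-- The square matrix whose determinant is the determinantal polynomial of the family `f`: its
column `0` holds the polynomials `f i` themselves and its column `j ≥ 1` the constants
`(f i).coeff (L + j)`. Columns run by increasing degree. -/
noncomputable def detPolyMatrix (L : ℕ) (f : Fin N → R[X]) : Matrix (Fin N) (Fin N) R[X] :=
  .of fun i j ↦ if (j : ℕ) = 0 then f i else C ((f i).coeff (L + j))

/-- The determinantal polynomial of `f` at level `L`. When all `f i` have degree less than `L + N`,
subtracting multiples of the other columns from column `0` shows that its degree is at most `L`. -/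
noncomputable def detPoly (L : ℕ) (f : Fin N → R[X]) : R[X] :=
  (detPolyMatrix L f).det

theorem map_detPoly (φ : R →+* S) (L : ℕ) (f : Fin N → R[X]) :
    (detPoly L f).map φ = detPoly L fun i ↦ (f i).map φ := by
  rw [detPoly, ← coe_mapRingHom, RingHom.map_det, detPoly]
  congr 1
  ext1 i j
  simp [detPolyMatrix, apply_ite (Polynomial.map φ)]

theorem dvd_detPoly {G : R[X]} (L : ℕ) {f : Fin (N + 1) → R[X]} (hf : ∀ i, G ∣ f i) :
    G ∣ detPoly L f := by
  rw [detPoly, Matrix.det_eq_sum_mul_adjugate_col _ 0]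
  exact Finset.dvd_sum fun i _ ↦ (hf i).mul_right _

theorem detPoly_sum_C_mul (L : ℕ) (P : Matrix (Fin N) (Fin N) R) (f : Fin N → R[X]) :
    detPoly L (fun i ↦ ∑ s, C (P i s) * f s) = C P.det * detPoly L f := by
  have hmul : detPolyMatrix L (fun i ↦ ∑ s, C (P i s) * f s) =
      C.mapMatrix P * detPolyMatrix L f := by
    ext1 i j
    by_cases hj : (j : ℕ) = 0 <;> simp [detPolyMatrix, Matrix.mul_apply, hj]
  rw [detPoly, hmul, Matrix.det_mul, ← RingHom.map_det, detPoly]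

theorem detPoly_eq_C_mul_of_coeff_castSucc_eq_zero {L : ℕ} {f : Fin (N + 1) → R[X]} (hN : N ≠ 0)
    (hf : ∀ i : Fin N, (f i.castSucc).coeff (L + N) = 0) :
    detPoly L f = C ((f (Fin.last N)).coeff (L + N)) * detPoly L fun i ↦ f i.castSucc := by
  have hminor : (detPolyMatrix L f).submatrix (Fin.last N).succAbove (Fin.last N).succAbove =
      detPolyMatrix L fun i ↦ f i.castSucc := by
    ext1 i j
    simp only [detPolyMatrix, Matrix.submatrix_apply, Matrix.of_apply, Fin.succAbove_last,
      Fin.val_castSucc]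
  have hcol (i : Fin (N + 1)) :
      detPolyMatrix L f i (Fin.last N) = C ((f i).coeff (L + N)) := by
    simp [detPolyMatrix, hN]
  rw [detPoly, Matrix.det_succ_column _ (Fin.last N), Fin.sum_univ_castSucc, hminor]
  simp [hcol, hf, detPoly, ← two_mul]

/-- The lower triangular matrix of the column operations that turn the determinantal matrix of a
family `f` into that of `G * f`, where `g` is a formal degree of `G`. -/
noncomputable def mulColMatrix (N : ℕ) (G : R[X]) (g : ℕ) : Matrix (Fin N) (Fin N) R[X] :=
  .of fun m j ↦ if (j : ℕ) = 0 then (if (m : ℕ) = 0 then G else 0)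
    else C ((X ^ (m : ℕ) * G).coeff (g + j))

theorem det_mulColMatrix {G : R[X]} {g : ℕ} (hG : G.natDegree ≤ g) :
    (mulColMatrix (N + 1) G g).det = C (G.coeff g ^ N) * G := by
  have htri : (mulColMatrix (N + 1) G g).IsLowerTriangular := by
    intro m j hmj
    have hlt : (m : ℕ) < j := hmj
    rw [mulColMatrix, Matrix.of_apply, if_neg (by lia), coeff_X_pow_mul', if_pos (by lia),
      coeff_eq_zero_of_natDegree_lt (by lia), C_0]
  rw [Matrix.det_of_isLowerTriangular _ htri, Fin.prod_univ_succ]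
  simp [mulColMatrix, mul_comm]

theorem detPolyMatrix_mul_left {G : R[X]} {g L : ℕ} {f : Fin (N + 1) → R[X]}
    (hG : G.natDegree ≤ g) (hf : ∀ i, (f i).natDegree < L + (N + 1)) :
    detPolyMatrix (L + g) (fun i ↦ G * f i) =
      detPolyMatrix L f * mulColMatrix (N + 1) G g := by
  ext1 i j
  rw [Matrix.mul_apply]
  cases j using Fin.cases with
  | zero => simp [detPolyMatrix, mulColMatrix, Fin.sum_univ_succ, mul_comm]
  | succ j =>
    rw [detPolyMatrix, Matrix.of_apply, if_neg (by simp),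
      coeff_mul_eq_sum_range hG (hf i) (by simp), Finset.sum_range, map_sum]
    refine Finset.sum_congr rfl fun m _ ↦ ?_
    cases m using Fin.cases with
    | zero =>
      have hGj : G.coeff (g + (j + 1)) = 0 := coeff_eq_zero_of_natDegree_lt (by lia)
      simp [mulColMatrix, hGj]
    | succ m => simp [detPolyMatrix, mulColMatrix]

theorem detPoly_mul_left {G : R[X]} {g L : ℕ} {f : Fin (N + 1) → R[X]}
    (hG : G.natDegree ≤ g) (hf : ∀ i, (f i).natDegree < L + (N + 1)) :
    detPoly (L + g) (fun i ↦ G * f i) = C (G.coeff g ^ N) * G * detPoly L f := by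
  rw [detPoly, detPolyMatrix_mul_left hG hf, Matrix.det_mul, det_mulColMatrix hG, mul_comm,
    detPoly]

end DetPoly

section Sylvester

variable {R S : Type*} [CommRing R] [CommRing S]

/-- The rows of the Sylvester-type matrix of `a` and `b`, as polynomials: the `p` multiples
`a, X * a, …` followed by the `q` multiples `b, X * b, …`. -/
noncomputable def sylvesterRows (p q : ℕ) (a b : R[X]) : Fin (p + q) → R[X] :=
  Fin.addCases (fun r ↦ X ^ (r : ℕ) * a) (fun r ↦ X ^ (r : ℕ) * b)

/-- The polynomial subresultant of `a` and `b` built from `p` shifts of `a` and `q` shifts of `b`.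
For `deg a = L + q` and `deg b = L + p` it is, up to sign, the classical subresultant of index `L`;
here `p`, `q` and `L` are formal and not tied to the degrees of `a` and `b`. -/
noncomputable def subresultant (p q L : ℕ) (a b : R[X]) : R[X] :=
  detPoly L (sylvesterRows p q a b)

theorem natDegree_sylvesterRows_lt {p q n : ℕ} {a b : R[X]} (ha : a.natDegree + p ≤ n)
    (hb : b.natDegree + q ≤ n) (i : Fin (p + q)) : (sylvesterRows p q a b i).natDegree < n := by
  cases i using Fin.addCases with
  | left r =>
    have := natDegree_mul_le_of_le (natDegree_X_pow_le (R := R) r) le_rfl (q := a)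
    rw [sylvesterRows, Fin.addCases_left]
    lia
  | right r =>
    have := natDegree_mul_le_of_le (natDegree_X_pow_le (R := R) r) le_rfl (q := b)
    rw [sylvesterRows, Fin.addCases_right]
    lia

theorem sylvesterRows_castSucc (p q : ℕ) (a b : R[X]) (i : Fin (p + q)) :
    sylvesterRows p (q + 1) a b i.castSucc = sylvesterRows p q a b i := by
  cases i using Fin.addCases with
  | left r =>
    rw [sylvesterRows, sylvesterRows, Fin.addCases_left]
    exact Fin.addCases_left r
  | right r =>
    rw [sylvesterRows, sylvesterRows, Fin.addCases_right]
    exact Fin.addCases_right r.castSucc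

theorem sylvesterRows_last (p q : ℕ) (a b : R[X]) :
    sylvesterRows p (q + 1) a b (Fin.last (p + q)) = X ^ q * b :=
  Fin.addCases_right (Fin.last q)

theorem sylvesterRows_mul_left (p q : ℕ) (G a b : R[X]) :
    sylvesterRows p q (G * a) (G * b) = fun i ↦ G * sylvesterRows p q a b i := by
  ext1 i
  cases i using Fin.addCases <;> simp [sylvesterRows, mul_left_comm]

theorem map_subresultant (φ : R →+* S) (p q L : ℕ) (a b : R[X]) :
    (subresultant p q L a b).map φ = subresultant p q L (a.map φ) (b.map φ) := by
  rw [subresultant, map_detPoly, subresultant]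
  congr 1
  ext1 i
  cases i using Fin.addCases <;> simp [sylvesterRows]

theorem subresultant_zero_one (L : ℕ) (a b : R[X]) : subresultant 0 1 L a b = b := by
  have hlast : sylvesterRows 0 1 a b 0 = X ^ 0 * b := sylvesterRows_last 0 0 a b
  refine (Matrix.det_fin_one (detPolyMatrix L (sylvesterRows 0 1 a b))).trans ?_
  simp [detPolyMatrix, hlast]

theorem dvd_subresultant {p q : ℕ} {G a b : R[X]} (L : ℕ) (ha : G ∣ a) (hb : G ∣ b) :
    G ∣ subresultant p (q + 1) L a b := by
  obtain ⟨a, rfl⟩ := ha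
  obtain ⟨b, rfl⟩ := hb
  rw [subresultant, sylvesterRows_mul_left]
  exact dvd_detPoly L fun _ ↦ dvd_mul_right _ _

theorem subresultant_mul_left {p q L g : ℕ} {G a b : R[X]} (hG : G.natDegree ≤ g)
    (ha : a.natDegree ≤ L + (q + 1)) (hb : b.natDegree ≤ L + p) :
    subresultant p (q + 1) (L + g) (G * a) (G * b) =
      C (G.coeff g ^ (p + q)) * G * subresultant p (q + 1) L a b := by
  have hrows : ∀ i, (sylvesterRows p (q + 1) a b i).natDegree < L + (p + q + 1) :=
    natDegree_sylvesterRows_lt (by lia) (by lia)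
  rw [subresultant, sylvesterRows_mul_left]
  exact detPoly_mul_left hG hrows

theorem C_leadingCoeff_pow_mul_dvd_subresultant [NoZeroDivisors R] {p q L : ℕ} {G A B : R[X]}
    (hGA : G ∣ A) (hGB : G ∣ B) (hG : G ≠ 0) (hGL : G.natDegree ≤ L)
    (hA : A.natDegree ≤ L + (q + 1)) (hB : B.natDegree ≤ L + p) :
    C (G.leadingCoeff ^ (p + q)) * G ∣ subresultant p (q + 1) L A B := by
  obtain ⟨k, rfl⟩ := Nat.exists_eq_add_of_le' hGL
  obtain ⟨a, rfl⟩ := hGA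
  obtain ⟨b, rfl⟩ := hGB
  have ha : a.natDegree ≤ k + (q + 1) := natDegree_right_le_of_natDegree_mul_le hG (by lia)
  have hb : b.natDegree ≤ k + p := natDegree_right_le_of_natDegree_mul_le hG (by lia)
  rw [subresultant_mul_left le_rfl ha hb]
  exact dvd_mul_right _ _

theorem subresultant_C_mul_add_mul (L : ℕ) {p q : ℕ} (c : R) (a b : R[X]) {w : R[X]}
    (hw : w.natDegree + p ≤ q) :
    subresultant p q L (C c * a + w * b) b = C (c ^ p) * subresultant p q L a b := by
  let P : Matrix (Fin p ⊕ Fin q) (Fin p ⊕ Fin q) R :=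
    .fromBlocks (.scalar _ c) (.of fun r s ↦ (X ^ (r : ℕ) * w).coeff s) 0 1
  have hdet : (P.reindex finSumFinEquiv finSumFinEquiv).det = c ^ p := by simp [P]
  have hexpand (r : Fin p) : X ^ (r : ℕ) * w =
      ∑ s : Fin q, C ((X ^ (r : ℕ) * w).coeff s) * X ^ (s : ℕ) := by
    have := natDegree_mul_le_of_le (natDegree_X_pow_le (R := R) r) le_rfl (q := w)
    exact (as_sum_range_C_mul_X_pow' _ (by lia)).trans (Finset.sum_range _)
  have hrows : sylvesterRows p q (C c * a + w * b) b = fun i ↦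
      ∑ s, C (P.reindex finSumFinEquiv finSumFinEquiv i s) * sylvesterRows p q a b s := by
    ext1 i
    rw [Fin.sum_univ_add]
    cases i using Fin.addCases with
    | left r =>
      have hleft : X ^ (r : ℕ) * (C c * a + w * b) = C c * (X ^ (r : ℕ) * a) +
          ∑ s : Fin q, C ((X ^ (r : ℕ) * w).coeff s) * (X ^ (s : ℕ) * b) := by
        simp_rw [← mul_assoc, ← Finset.sum_mul, ← hexpand]
        ring
      simp [sylvesterRows, P, Matrix.diagonal_apply, hleft, apply_ite C, ite_mul]
    | right r => simp [sylvesterRows, P, Matrix.one_apply]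
  rw [subresultant, hrows, detPoly_sum_C_mul, hdet, subresultant]

theorem subresultant_succ_right {p q L : ℕ} {a b : R[X]} (hpq : p + q ≠ 0)
    (ha : a.natDegree ≤ L + q) (hb : b.natDegree ≤ L + p) :
    subresultant p (q + 1) L a b = C (b.coeff (L + p)) * subresultant p q L a b := by
  have htop (i : Fin (p + q)) :
      (sylvesterRows p (q + 1) a b i.castSucc).coeff (L + (p + q)) = 0 := by
    rw [sylvesterRows_castSucc]
    exact coeff_eq_zero_of_natDegree_lt (natDegree_sylvesterRows_lt (by lia) (by lia) i)
  have hdet := detPoly_eq_C_mul_of_coeff_castSucc_eq_zero hpq htop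
  rwa [sylvesterRows_last, ← add_assoc, coeff_X_pow_mul,
    funext (sylvesterRows_castSucc p q a b)] at hdet

theorem sign_finAddFlip_trans_finCongr_symm (m n : ℕ) :
    Equiv.Perm.sign ((finAddFlip (m := n) (n := m)).trans (finCongr (add_comm n m)).symm) =
      (-1) ^ (m * n) := by
  -- Both sides relate the two orders of the arguments in the resultant of `X ^ m` and `1`.
  have hcomm := resultant_comm (X ^ m : ℤ[X]) 1 m n
  rw [resultant, sylvester_comm, Matrix.det_reindex, ← resultant] at hcomm
  have hne : resultant (1 : ℤ[X]) (X ^ m) n m ≠ 0 := by simp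
  exact Units.ext (by simpa [finAddFlip, Equiv.trans_assoc] using mul_right_cancel₀ hne hcomm)

theorem subresultant_comm (p q L : ℕ) (a b : R[X]) :
    subresultant p q L a b = (-1) ^ (p * q) * subresultant q p L b a := by
  have hmatrix : detPolyMatrix L (sylvesterRows p q a b) =
      (detPolyMatrix L (sylvesterRows q p b a)).reindex finAddFlip
        (finCongr (add_comm q p)) := by
    ext1 i j
    cases i using Fin.addCases <;> simp [detPolyMatrix, sylvesterRows, finAddFlip]
  rw [subresultant, detPoly, hmatrix, Matrix.det_reindex]
  have hsign :
      Equiv.Perm.sign ((finCongr (add_comm q p)).trans finAddFlip.symm) = (-1) ^ (p * q) := by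
    rw [← sign_finAddFlip_trans_finCongr_symm, ← Equiv.Perm.sign_symm]
    rfl
  simp [hsign, subresultant, detPoly]

end Sylvester

section RemainderSequence

variable {K : Type*} [CommRing K] [NoZeroDivisors K]

theorem C_pow_mul_subresultant_succ_of_rec {k L : ℕ} {a b T q : K[X]} {c c' : K}
    (ha : a.natDegree ≤ L + k + 2) (hb : b.natDegree = L + k + 1) (hT : T.natDegree ≤ L + k)
    (hrec : C c * a = q * b + C c' * T) :
    C (c ^ (k + 1)) * subresultant (k + 1) (k + 2) L a b =
      C (c' ^ (k + 1) * b.leadingCoeff ^ 2) * subresultant k (k + 1) L b T := by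
  have hq : q.natDegree ≤ 1 := by
    have hbq : b * q = C c * a - C c' * T := by rw [hrec]; ring
    have hb0 : b ≠ 0 := ne_zero_of_natDegree_gt (n := 0) (by lia)
    apply natDegree_right_le_of_natDegree_mul_le hb0
    rw [hbq, hb]
    exact (natDegree_sub_le_of_le ((natDegree_C_mul_le _ _).trans ha)
      ((natDegree_C_mul_le _ _).trans (by lia))).trans (max_self _).le
  have hcoeff : b.coeff (L + (k + 1)) = b.leadingCoeff := by rw [leadingCoeff, hb, add_assoc]
  have heven : (-1 : K[X]) ^ ((k + 1) * k) = 1 := by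
    rw [mul_comm, (Nat.even_mul_succ_self k).neg_one_pow]
  calc C (c ^ (k + 1)) * subresultant (k + 1) (k + 2) L a b
      = subresultant (k + 1) (k + 2) L (C c * a + -q * b) b :=
        (subresultant_C_mul_add_mul L c a b (by rw [natDegree_neg]; lia)).symm
    _ = subresultant (k + 1) (k + 2) L (C c' * T + 0 * b) b := by rw [hrec]; ring_nf
    _ = C (c' ^ (k + 1)) * subresultant (k + 1) (k + 2) L T b :=
        subresultant_C_mul_add_mul L c' T b (by simp)
    _ = C (c' ^ (k + 1) * b.leadingCoeff ^ 2) * subresultant (k + 1) k L T b := by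
        rw [subresultant_succ_right (by lia) (by lia) (by lia),
          subresultant_succ_right (by lia) (by lia) (by lia), hcoeff]
        simp only [map_mul, map_pow]
        ring
    _ = _ := by rw [subresultant_comm, heven, one_mul]

theorem C_pow_mul_eq_subresultant_of_rec (n : ℕ) {L : ℕ} {R Q : ℕ → K[X]} {t : ℕ → K}
    (ht : ∀ j < n, t (j + 1) = (R (j + 1)).leadingCoeff)
    (hdeg : ∀ j ≤ n + 1, (R j).natDegree + j = L + (n + 1))
    (hrec : ∀ j < n, C (t (j + 1) ^ 2) * R j = Q j * R (j + 1) + C (t j ^ 2) * R (j + 2)) :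
    C (t 0 ^ (2 * n)) * R (n + 1) = subresultant n (n + 1) L (R 0) (R 1) := by
  induction n generalizing R Q t with
  | zero => simp [subresultant_zero_one]
  | succ n ih =>
    have hR0 := hdeg 0 (by lia)
    have hR1 := hdeg 1 (by lia)
    have hR2 := hdeg 2 (by lia)
    have ht1 : t 1 = (R 1).leadingCoeff := ht 0 (by lia)
    have ht1_ne : t 1 ≠ 0 := by
      rw [ht1, leadingCoeff_ne_zero]
      exact ne_zero_of_natDegree_gt (n := 0) (by lia)
    have htail : C (t 1 ^ (2 * n)) * R (n + 2) = subresultant n (n + 1) L (R 1) (R 2) :=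
      ih (R := fun j ↦ R (j + 1)) (Q := fun j ↦ Q (j + 1)) (t := fun j ↦ t (j + 1))
        (fun j hj ↦ ht (j + 1) (by lia))
        (fun j hj ↦ by have := hdeg (j + 1) (by lia); lia)
        (fun j hj ↦ hrec (j + 1) (by lia))
    have hstep := C_pow_mul_subresultant_succ_of_rec (k := n) (L := L) (by lia) (by lia) (by lia)
      (hrec 0 (by lia))
    apply mul_left_cancel₀ (C_ne_zero.mpr (pow_ne_zero (n + 1) (pow_ne_zero 2 ht1_ne)))
    rw [hstep, ← htail, ← ht1]
    simp only [map_mul, map_pow]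
    ring

end RemainderSequence

/-- `R 0, …, R ℓ, R (ℓ + 1) = 0` is the subresultant polynomial remainder sequence of `R 0` and
`R 1`, with quotients `Q` and scalars `α`, `β` given by the auxiliary sequence `ψ`. Indices follow
the convention `α i * R (i - 1) = Q i * R i + β i * R (i + 1)`, so `Q`, `α`, `β` and `ψ` are
constrained only from index `1` on. -/
structure IsSubresultantPRS {K : Type*} [Field K] (ℓ : ℕ) (R Q : ℕ → K[X]) (α β ψ : ℕ → K) :
    Prop where
  ne_zero : ∀ i, i ≤ ℓ → R i ≠ 0
  succ_length_eq_zero : R (ℓ + 1) = 0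
  α_ne_zero : ∀ i, 1 ≤ i → i ≤ ℓ → α i ≠ 0
  β_ne_zero : ∀ i, 1 ≤ i → i ≤ ℓ → β i ≠ 0
  degree_lt : ∀ i, 1 ≤ i → i ≤ ℓ → (R (i + 1)).degree < (R i).degree
  smul_eq : ∀ i, 1 ≤ i → i ≤ ℓ → α i • R (i - 1) = Q i * R i + β i • R (i + 1)
  α_eq : ∀ i, 1 ≤ i → i ≤ ℓ →
    α i = (R i).leadingCoeff ^ ((R (i - 1)).natDegree - (R i).natDegree + 1)
  ψ_one : ψ 1 = -1
  ψ_eq : ∀ i, 2 ≤ i → i ≤ ℓ →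
    ψ i = (-(R (i - 1)).leadingCoeff) ^ ((R (i - 2)).natDegree - (R (i - 1)).natDegree) /
      ψ (i - 1) ^ ((R (i - 2)).natDegree - (R (i - 1)).natDegree - 1)
  β_one : β 1 = (-1) ^ ((R 0).natDegree - (R 1).natDegree + 1)
  β_eq : ∀ i, 2 ≤ i → i ≤ ℓ →
    β i = -(R (i - 1)).leadingCoeff * ψ i ^ ((R (i - 1)).natDegree - (R i).natDegree)

/-- A remainder sequence of length `ℓ` is normal if every degree drop up to `R ℓ` is exactly `1`. -/
def IsNormalPRS {K : Type*} [Semiring K] (ℓ : ℕ) (R : ℕ → K[X]) : Prop :=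
  ∀ i, 1 ≤ i → i ≤ ℓ → (R (i - 1)).natDegree = (R i).natDegree + 1

theorem IsNormalPRS.natDegree_add {K : Type*} [Semiring K] {ℓ : ℕ} {R : ℕ → K[X]}
    (h : IsNormalPRS ℓ R) {j : ℕ} (hj : j ≤ ℓ) : (R j).natDegree + j = (R 0).natDegree := by
  induction j with
  | zero => simp
  | succ j ih =>
    have hdeg : (R j).natDegree = (R (j + 1)).natDegree + 1 := h (j + 1) (by lia) hj
    have := ih (by lia)
    lia

namespace IsSubresultantPRS

variable {K : Type*} [Field K] {ℓ : ℕ} {R Q : ℕ → K[X]} {α β ψ : ℕ → K}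

theorem α_eq_sq (h : IsSubresultantPRS ℓ R Q α β ψ) (hnormal : IsNormalPRS ℓ R) {j : ℕ}
    (hj : j < ℓ) : α (j + 1) = (R (j + 1)).leadingCoeff ^ 2 := by
  rw [h.α_eq (j + 1) (by lia) (by lia), hnormal (j + 1) (by lia) (by lia), Nat.add_sub_cancel_left]

theorem β_one_eq_one (h : IsSubresultantPRS ℓ R Q α β ψ) (hnormal : IsNormalPRS ℓ R)
    (hℓ : 1 ≤ ℓ) : β 1 = 1 := by
  have hdeg : (R 0).natDegree = (R 1).natDegree + 1 := hnormal 1 le_rfl hℓ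
  simp [h.β_one, hdeg]

theorem β_eq_sq (h : IsSubresultantPRS ℓ R Q α β ψ) (hnormal : IsNormalPRS ℓ R) {j : ℕ}
    (hj : j + 1 < ℓ) : β (j + 2) = (R (j + 1)).leadingCoeff ^ 2 := by
  have hdeg : (R j).natDegree = (R (j + 1)).natDegree + 1 := hnormal (j + 1) (by lia) (by lia)
  have hdeg' : (R (j + 1)).natDegree = (R (j + 2)).natDegree + 1 :=
    hnormal (j + 2) (by lia) (by lia)
  have hψ : ψ (j + 2) = -(R (j + 1)).leadingCoeff := by
    simp [h.ψ_eq (j + 2) (by lia) (by lia), hdeg]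
  have hβ := h.β_eq (j + 2) (by lia) (by lia)
  simp [hβ, hψ, hdeg', sq]

theorem eq_subresultant (h : IsSubresultantPRS ℓ R Q α β ψ) (hnormal : IsNormalPRS ℓ R) {n : ℕ}
    (hn : n < ℓ) :
    R (n + 1) = subresultant n (n + 1) (R (n + 1)).natDegree (R 0) (R 1) := by
  let t : ℕ → K := Function.update (fun j ↦ (R j).leadingCoeff) 0 1
  have ht (j : ℕ) : t (j + 1) = (R (j + 1)).leadingCoeff := by simp [t]
  have hβ (j : ℕ) (hj : j < ℓ) : β (j + 1) = t j ^ 2 := by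
    cases j with
    | zero => simp [t, h.β_one_eq_one hnormal hj]
    | succ j => rw [ht, h.β_eq_sq hnormal hj]
  have hrec (j : ℕ) (hj : j < ℓ) :
      C (t (j + 1) ^ 2) * R j = Q (j + 1) * R (j + 1) + C (t j ^ 2) * R (j + 2) := by
    simpa only [h.α_eq_sq hnormal hj, hβ j hj, ht, smul_eq_C_mul, Nat.add_sub_cancel] using
      h.smul_eq (j + 1) (by lia) (by lia)
  have hdeg (j : ℕ) (hj : j ≤ n + 1) :
      (R j).natDegree + j = (R (n + 1)).natDegree + (n + 1) :=
    (hnormal.natDegree_add (by lia)).trans (hnormal.natDegree_add hn).symm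
  simpa [t] using
    C_pow_mul_eq_subresultant_of_rec n (fun j _ ↦ ht j) hdeg (fun j hj ↦ hrec j (by lia))

end IsSubresultantPRS

theorem stmt_0_general {D K : Type*} [CommRing D] [Field K] {φ : D →+* K}
    (hφ : Function.Injective φ) {ℓ : ℕ} {R Q : ℕ → K[X]} {α β ψ : ℕ → K}
    (hR : IsSubresultantPRS ℓ R Q α β ψ) (hnormal : IsNormalPRS ℓ R) {A B G P : D[X]}
    (hA : R 0 = A.map φ) (hB : R 1 = B.map φ) (hGA : G ∣ A) (hGB : G ∣ B) {i : ℕ} (hi : 1 ≤ i)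
    (hiℓ : i ≤ ℓ) (hP : P.map φ = R i) :
    C (G.leadingCoeff ^ (2 * (i - 1))) * G ∣ P := by
  obtain ⟨n, rfl⟩ := Nat.exists_eq_add_of_le' hi
  have : IsDomain D := hφ.isDomain φ
  have hdegP : P.natDegree = (R (n + 1)).natDegree := by
    rw [← hP, natDegree_map_eq_of_injective hφ]
  have hPsub : P = subresultant n (n + 1) P.natDegree A B := by
    apply map_injective φ hφ
    rw [map_subresultant, hP, hdegP, ← hA, ← hB]
    exact hR.eq_subresultant hnormal hiℓ
  have hGP : G ∣ P := hPsub ▸ dvd_subresultant P.natDegree hGA hGB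
  have hP0 : P ≠ 0 := by
    rintro rfl
    exact hR.ne_zero (n + 1) hiℓ (by rw [← hP, Polynomial.map_zero])
  have hdegA : A.natDegree = P.natDegree + (n + 1) := by
    rw [hdegP, hnormal.natDegree_add hiℓ, hA, natDegree_map_eq_of_injective hφ]
  have hdegB : B.natDegree = P.natDegree + n := by
    have hB1 := hnormal.natDegree_add (j := 1) (by lia)
    rw [hA, hB, natDegree_map_eq_of_injective hφ, natDegree_map_eq_of_injective hφ] at hB1
    lia
  rw [Nat.add_sub_cancel, two_mul, hPsub]
  exact C_leadingCoeff_pow_mul_dvd_subresultant hGA hGB (ne_zero_of_dvd_ne_zero hP0 hGP)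
    (natDegree_le_of_dvd hGP hP0) hdegA.le hdegB.le

/-- Let `D` be a UFD with a normalized gcd and fraction field `K`, and let
`A, B ∈ D[x]` be nonzero with `deg A ≥ deg B ≥ 1`.  Let
`(R 0, R 1, …, R ℓ, R (ℓ+1) = 0)` be the subresultant PRS of `A` and `B` (with
quotients `Q i`, multipliers `α i`, `β i` given by the subresultant formulas via the
auxiliary sequence `ψ i`, degrees `d i = deg (R i)`, and all terms lying in `D[x]` as
witnessed by `R' i`), and assume it is normal, i.e. `d (i-1) = d i + 1` for
`1 ≤ i ≤ ℓ`.  Let `G` be a primitive greatest common divisor of `A` and `B` in `D[x]`.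
Then for every `i` with `2 ≤ i ≤ ℓ`, `lc(G)^(2(i-1))` divides `cont (R i)`. -/
theorem stmt_0 {D : Type*} [CommRing D] [IsDomain D] [NormalizedGCDMonoid D]
    [UniqueFactorizationMonoid D]
    (A B G : Polynomial D) (hA : A ≠ 0) (hB : B ≠ 0)
    (hdeg : B.natDegree ≤ A.natDegree) (hB1 : 1 ≤ B.natDegree)
    -- the subresultant PRS `R 0 = A, R 1 = B, …, R ℓ ≠ 0, R (ℓ+1) = 0` of `A` and `B`
    -- over the fraction field `K` of `D`, with quotients `Q i`, scalars `α i, β i`,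
    -- degrees `d i`, the auxiliary sequence `ψ i`, and terms `R' i` in `D[x]`
    (ℓ : ℕ) (R Q : ℕ → Polynomial (FractionRing D))
    (α β ψ : ℕ → FractionRing D)
    (R' : ℕ → Polynomial D) (d : ℕ → ℕ)
    (hR0 : R 0 = A.map (algebraMap D (FractionRing D)))
    (hR1 : R 1 = B.map (algebraMap D (FractionRing D)))
    (hRne : ∀ i, i ≤ ℓ → R i ≠ 0)
    (hRlast : R (ℓ + 1) = 0)
    (hd : ∀ i, d i = (R i).natDegree)
    (hαne : ∀ i, 1 ≤ i → i ≤ ℓ → α i ≠ 0)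
    (hβne : ∀ i, 1 ≤ i → i ≤ ℓ → β i ≠ 0)
    (hdesc : ∀ i, 1 ≤ i → i ≤ ℓ → (R (i + 1)).degree < (R i).degree)
    (hrec : ∀ i, 1 ≤ i → i ≤ ℓ → α i • R (i - 1) = Q i * R i + β i • R (i + 1))
    (hα : ∀ i, 1 ≤ i → i ≤ ℓ → α i = (R i).leadingCoeff ^ (d (i - 1) - d i + 1))
    (hψ1 : ψ 1 = -1)
    (hψ : ∀ i, 2 ≤ i → i ≤ ℓ →
      ψ i = (-(R (i - 1)).leadingCoeff) ^ (d (i - 2) - d (i - 1)) /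
        ψ (i - 1) ^ (d (i - 2) - d (i - 1) - 1))
    (hβ1 : β 1 = (-1) ^ (d 0 - d 1 + 1))
    (hβ : ∀ i, 2 ≤ i → i ≤ ℓ →
      β i = -(R (i - 1)).leadingCoeff * ψ i ^ (d (i - 1) - d i))
    (hR' : ∀ i, i ≤ ℓ + 1 → (R' i).map (algebraMap D (FractionRing D)) = R i)
    -- normality
    (hnormal : ∀ i, 1 ≤ i → i ≤ ℓ → d (i - 1) = d i + 1)
    -- `G` is a primitive greatest common divisor of `A` and `B` in `D[x]`
    (hGA : G ∣ A) (hGB : G ∣ B)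
    (hGgreatest : ∀ G' : Polynomial D, G' ∣ A → G' ∣ B → G' ∣ G)
    (hGprim : G.IsPrimitive) :
    ∀ i, 2 ≤ i → i ≤ ℓ → G.leadingCoeff ^ (2 * (i - 1)) ∣ (R' i).content := by
  intro i hi hiℓ
  obtain rfl : d = fun i ↦ (R i).natDegree := funext hd
  have hPRS : IsSubresultantPRS ℓ R Q α β ψ :=
    ⟨hRne, hRlast, hαne, hβne, hdesc, hrec, hα, hψ1, hψ, hβ1, hβ⟩
  have hdvd : C (G.leadingCoeff ^ (2 * (i - 1))) * G ∣ R' i :=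
    stmt_0_general (IsFractionRing.injective D (FractionRing D)) hPRS hnormal hR0 hR1 hGA hGB
      (by lia) hiℓ (hR' i (by lia))
  exact dvd_content_iff_C_dvd.2 (dvd_of_mul_right_dvd hdvd)
end

section
/- Let I be an ideal of D[x], let d ∈ ℕ, and let T ∈ I be a nonzero polynomial of degree d whose leading coefficient t = lc(T) has minimal Euclidean norm among the leading coefficients of all nonzero degree-d elements of I. Then for every nonzero L ∈ I with deg L ≤ d, the element t divides lc(L) in D. -/
open Polynomial

/-!
The leading coefficients of the elements of `I` of degree at most `d`, together with `0`, form an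
ideal of `D`, and every nonzero element of it is the leading coefficient of an element of `I` of
degree exactly `d` (multiply by a power of `x`). So `t` is a nonzero element of least norm in an
ideal of `D`, and division with remainder shows that it divides every element of that ideal.
-/

theorem dvd_of_mem_ideal_of_forall_not_r {D : Type*} [EuclideanDomain D] {J : Ideal D} {t a : D}
    (ht : t ∈ J) (ht0 : t ≠ 0) (hmin : ∀ b ∈ J, b ≠ 0 → ¬ EuclideanDomain.r b t) (ha : a ∈ J) :
    t ∣ a := by
  have hmod : a % t ∈ J := (mod_mem_iff ht).mpr ha
  rw [← EuclideanDomain.mod_eq_zero]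
  by_contra hne
  exact hmin (a % t) hmod hne (EuclideanDomain.mod_lt a ht0)

section LeadingCoeffNth

variable {R : Type*} [CommSemiring R] {I : Ideal R[X]} {n : ℕ}

theorem leadingCoeff_mem_leadingCoeffNth {p : R[X]} (hp : p ∈ I) (hpn : p.natDegree ≤ n) :
    p.leadingCoeff ∈ I.leadingCoeffNth n :=
  (I.mem_leadingCoeffNth n _).mpr ⟨p, hp, degree_le_of_natDegree_le hpn, rfl⟩

theorem exists_mem_natDegree_eq_of_mem_leadingCoeffNth {a : R}
    (ha : a ∈ I.leadingCoeffNth n) (ha0 : a ≠ 0) :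
    ∃ p ∈ I, p.natDegree = n ∧ p.leadingCoeff = a := by
  obtain ⟨p, hpI, hpn, rfl⟩ := (I.mem_leadingCoeffNth n a).mp ha
  have hp0 : p ≠ 0 := leadingCoeff_ne_zero.mp ha0
  have : Nontrivial R := nontrivial_of_ne _ _ ha0
  refine ⟨p * X ^ (n - p.natDegree), I.mul_mem_right _ hpI, ?_, leadingCoeff_mul_X_pow⟩
  rw [natDegree_mul_X_pow _ hp0, Nat.add_sub_cancel' (natDegree_le_of_degree_le hpn)]

end LeadingCoeffNth

/-- Let `D` be a Euclidean domain, `I` an ideal of `D[x]`, `d ∈ ℕ`, and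
`T ∈ I` a nonzero polynomial of degree `d` whose leading coefficient `t = lc T` has
minimal Euclidean norm (minimal with respect to the Euclidean "smaller" relation)
among the leading coefficients of all nonzero degree-`d` elements of `I`.  Then for
every nonzero `L ∈ I` with `deg L ≤ d`, the element `t` divides `lc L` in `D`. -/
theorem stmt_3 {D : Type*} [EuclideanDomain D]
    (I : Ideal (Polynomial D)) (d : ℕ) (T : Polynomial D)
    (hTI : T ∈ I) (hT0 : T ≠ 0) (hTd : T.natDegree = d)
    (hmin : ∀ S ∈ I, S ≠ 0 → S.natDegree = d →
      ¬ EuclideanDomain.r S.leadingCoeff T.leadingCoeff) :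
    ∀ L ∈ I, L ≠ 0 → L.natDegree ≤ d → T.leadingCoeff ∣ L.leadingCoeff := by
  intro L hL _ hLd
  have ht0 : T.leadingCoeff ≠ 0 := leadingCoeff_ne_zero.mpr hT0
  refine dvd_of_mem_ideal_of_forall_not_r (leadingCoeff_mem_leadingCoeffNth hTI hTd.le) ht0 ?_
    (leadingCoeff_mem_leadingCoeffNth hL hLd)
  intro b hb hb0
  obtain ⟨S, hSI, hSd, rfl⟩ := exists_mem_natDegree_eq_of_mem_leadingCoeffNth hb hb0
  exact hmin S hSI (leadingCoeff_ne_zero.mp hb0) hSd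
end

section
/- Let I be an ideal of D[x], let d ∈ ℕ, and let T, T' ∈ I be nonzero polynomials of degree d whose leading coefficients both have minimal Euclidean norm among the leading coefficients of all nonzero degree-d elements of I. Then lc(T) and lc(T') are associates in D. -/
open Polynomial

/-! The leading coefficients of the degree-`d` elements of `I`, together with `0`, form an ideal
of `D`, namely `I.leadingCoeffNth d`. In a Euclidean domain an element of minimal norm among the
nonzero elements of an ideal generates that ideal, so `lc T` and `lc T'` generate the same one. -/

theorem span_singleton_eq_of_forall_not_r {D : Type*} [EuclideanDomain D] {J : Ideal D} {a : D}
    (haJ : a ∈ J) (ha0 : a ≠ 0) (hmin : ∀ b ∈ J, b ≠ 0 → ¬ EuclideanDomain.r b a) :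
    Ideal.span {a} = J := by
  refine le_antisymm ((Ideal.span_singleton_le_iff_mem J).mpr haJ) fun b hbJ ↦ ?_
  have hmodJ : b % a ∈ J := by
    rw [EuclideanDomain.mod_eq_sub_mul_div]
    exact J.sub_mem hbJ (J.mul_mem_right _ haJ)
  have hmod : b % a = 0 := by
    by_contra hne
    exact hmin _ hmodJ hne (EuclideanDomain.mod_lt b ha0)
  exact Ideal.mem_span_singleton.mpr (EuclideanDomain.mod_eq_zero.mp hmod)

theorem mem_leadingCoeffNth_iff_of_ne_zero {R : Type*} [Semiring R] {I : Ideal R[X]} {n : ℕ}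
    {a : R} (ha : a ≠ 0) :
    a ∈ I.leadingCoeffNth n ↔ ∃ p ∈ I, p.natDegree = n ∧ p.leadingCoeff = a := by
  simp only [Ideal.leadingCoeffNth, Ideal.degreeLE, Submodule.mem_map, Submodule.mem_inf,
    mem_degreeLE, lcoeff_apply]
  constructor
  · rintro ⟨p, ⟨hdeg, hpI⟩, rfl⟩
    have hnat : p.natDegree = n :=
      natDegree_eq_of_le_of_coeff_ne_zero (natDegree_le_of_degree_le hdeg) ha
    exact ⟨p, hpI, hnat, by rw [leadingCoeff, hnat]⟩
  · rintro ⟨p, hpI, rfl, rfl⟩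
    exact ⟨p, ⟨degree_le_natDegree, hpI⟩, rfl⟩

theorem span_leadingCoeff_eq_leadingCoeffNth {D : Type*} [EuclideanDomain D] {I : Ideal D[X]}
    {d : ℕ} {T : D[X]} (hTI : T ∈ I) (hT0 : T ≠ 0) (hTd : T.natDegree = d)
    (hmin : ∀ S ∈ I, S ≠ 0 → S.natDegree = d →
      ¬ EuclideanDomain.r S.leadingCoeff T.leadingCoeff) :
    Ideal.span {T.leadingCoeff} = I.leadingCoeffNth d := by
  have hlc : T.leadingCoeff ≠ 0 := leadingCoeff_ne_zero.mpr hT0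
  have hmem : T.leadingCoeff ∈ I.leadingCoeffNth d :=
    (mem_leadingCoeffNth_iff_of_ne_zero hlc).mpr ⟨T, hTI, hTd, rfl⟩
  refine span_singleton_eq_of_forall_not_r hmem hlc fun b hb hb0 ↦ ?_
  obtain ⟨S, hSI, hSd, rfl⟩ := (mem_leadingCoeffNth_iff_of_ne_zero hb0).mp hb
  exact hmin S hSI (leadingCoeff_ne_zero.mp hb0) hSd

/-- Let `D` be a Euclidean domain, `I` an ideal of `D[x]`, `d ∈ ℕ`, and let
`T, T' ∈ I` be nonzero polynomials of degree `d` whose leading coefficients both have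
minimal Euclidean norm (i.e. are minimal with respect to the Euclidean "smaller"
relation) among the leading coefficients of all nonzero degree-`d` elements of `I`.
Then `lc T` and `lc T'` are associates in `D`. -/
theorem stmt_4 {D : Type*} [EuclideanDomain D]
    (I : Ideal (Polynomial D)) (d : ℕ) (T T' : Polynomial D)
    (hTI : T ∈ I) (hT0 : T ≠ 0) (hTd : T.natDegree = d)
    (hmin : ∀ S ∈ I, S ≠ 0 → S.natDegree = d →
      ¬ EuclideanDomain.r S.leadingCoeff T.leadingCoeff)
    (hT'I : T' ∈ I) (hT'0 : T' ≠ 0) (hT'd : T'.natDegree = d)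
    (hmin' : ∀ S ∈ I, S ≠ 0 → S.natDegree = d →
      ¬ EuclideanDomain.r S.leadingCoeff T'.leadingCoeff) :
    Associated T.leadingCoeff T'.leadingCoeff := by
  rw [← Ideal.span_singleton_eq_span_singleton,
    span_leadingCoeff_eq_leadingCoeffNth hTI hT0 hTd hmin,
    span_leadingCoeff_eq_leadingCoeffNth hT'I hT'0 hT'd hmin']
end

section
/- Let (R_0, R_1, ..., R_ℓ, R_{ℓ+1}=0) be the subresultant PRS of A and B, let γ_0 = γ_1 = 1 and let γ_2, ..., γ_{ℓ+1} ∈ K be arbitrary nonzero scalars; set R̃_i := (1/γ_i)·R_i for 0 ≤ i ≤ ℓ+1. Then (R̃_0, R̃_1, ..., R̃_ℓ, R̃_{ℓ+1}=0) is a PRS of A and B with multipliers α̃_i = lc(R̃_i)^{d_{i-1}-d_i+1}, and β̃_1 = (-1)^{d_0-d_1+1}·γ_2, β̃_i = (-lc(R̃_{i-1})·ψ̃_i^{d_{i-1}-d_i} / γ_i^{d_{i-1}-d_i+1})·γ_{i+1} for 2 ≤ i ≤ ℓ, where ψ̃_1 = -1 and ψ̃_i = (-γ_{i-1}·lc(R̃_{i-1}))^{d_{i-2}-d_{i-1}}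 / ψ̃_{i-1}^{d_{i-2}-d_{i-1}-1}; that is, for each 1 ≤ i ≤ ℓ there exists Q̃_i ∈ K[x] with α̃_i·R̃_{i-1} = Q̃_i·R̃_i + β̃_i·R̃_{i+1}. -/
open Polynomial

/-!
Multiplying the relation `α i • R (i - 1) = Q i * R i + β i • R (i + 1)` by a nonzero scalar `δ i`
shows that `(γ i)⁻¹ • R i` is again a PRS, with multipliers `δ i * γ (i - 1) * α i` and
`δ i * γ (i + 1) * β i`. Since `γ i * lc (R̃ i) = lc (R i)`, the sequences `ψ̃` and `ψ` satisfy the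
same recursion and coincide, so the claimed multipliers are the ones obtained from
`δ i = (γ i ^ (d (i - 1) - d i + 1) * γ (i - 1))⁻¹`.
-/

/-- `R 0, …, R ℓ, R (ℓ + 1) = 0` is a polynomial remainder sequence of `R 0` and `R 1`, with
quotients `Q i` and multipliers `α i`, `β i` for `1 ≤ i ≤ ℓ`. Values of the sequences outside these
ranges are unconstrained. -/
structure IsPRS {K : Type*} [Field K] (ℓ : ℕ) (R Q : ℕ → K[X]) (α β : ℕ → K) : Prop where
  ne_zero : ∀ i, i ≤ ℓ → R i ≠ 0
  last_eq_zero : R (ℓ + 1) = 0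
  alpha_ne_zero : ∀ i, 1 ≤ i → i ≤ ℓ → α i ≠ 0
  beta_ne_zero : ∀ i, 1 ≤ i → i ≤ ℓ → β i ≠ 0
  degree_lt : ∀ i, 1 ≤ i → i ≤ ℓ → (R (i + 1)).degree < (R i).degree
  smul_eq : ∀ i, 1 ≤ i → i ≤ ℓ → α i • R (i - 1) = Q i * R i + β i • R (i + 1)

/-- The recursion, for `1 ≤ i ≤ ℓ`, of the auxiliary sequence `ψ` in the subresultant formulas. The
degrees `d` and the leading coefficients `c` are arbitrary sequences here, because the rescaled PRS
uses `c i = γ i * lc (R̃ i)`. -/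
structure IsSubresultantPsi {K : Type*} [Field K] (ℓ : ℕ) (d : ℕ → ℕ) (c ψ : ℕ → K) : Prop where
  one : ψ 1 = -1
  eq_div : ∀ i, 2 ≤ i → i ≤ ℓ →
    ψ i = (-c (i - 1)) ^ (d (i - 2) - d (i - 1)) / ψ (i - 1) ^ (d (i - 2) - d (i - 1) - 1)

/-- A PRS whose multipliers are given by the subresultant formulas with auxiliary sequence `ψ`. -/
structure IsSubresultantPRS_s12 {K : Type*} [Field K] (ℓ : ℕ) (R Q : ℕ → K[X]) (α β ψ : ℕ → K) : Prop
    extends IsPRS ℓ R Q α β where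
  alpha_eq : ∀ i, 1 ≤ i → i ≤ ℓ →
    α i = (R i).leadingCoeff ^ ((R (i - 1)).natDegree - (R i).natDegree + 1)
  psi : IsSubresultantPsi ℓ (fun i => (R i).natDegree) (fun i => (R i).leadingCoeff) ψ
  beta_one : β 1 = (-1) ^ ((R 0).natDegree - (R 1).natDegree + 1)
  beta_eq : ∀ i, 2 ≤ i → i ≤ ℓ →
    β i = -(R (i - 1)).leadingCoeff * ψ i ^ ((R (i - 1)).natDegree - (R i).natDegree)

section Rescaling

variable {K : Type*} [Field K] {ℓ : ℕ} {R Q Rt : ℕ → K[X]} {α β ψ αt βt ψt γ : ℕ → K}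

theorem IsPRS.rescale {δ : ℕ → K} (h : IsPRS ℓ R Q α β)
    (hγ : ∀ i, i ≤ ℓ + 1 → γ i ≠ 0) (hδ : ∀ i, 1 ≤ i → i ≤ ℓ → δ i ≠ 0)
    (hRt : ∀ i, i ≤ ℓ + 1 → Rt i = (γ i)⁻¹ • R i)
    (hαt : ∀ i, 1 ≤ i → i ≤ ℓ → αt i = δ i * γ (i - 1) * α i)
    (hβt : ∀ i, 1 ≤ i → i ≤ ℓ → βt i = δ i * γ (i + 1) * β i) :
    IsPRS ℓ Rt (fun i => (δ i * γ i) • Q i) αt βt where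
  ne_zero i hi := by
    rw [hRt i (by lia)]
    exact smul_ne_zero (inv_ne_zero (hγ i (by lia))) (h.ne_zero i hi)
  last_eq_zero := by rw [hRt _ le_rfl, h.last_eq_zero, smul_zero]
  alpha_ne_zero i h1 hi := by
    rw [hαt i h1 hi]
    exact mul_ne_zero (mul_ne_zero (hδ i h1 hi) (hγ _ (by lia))) (h.alpha_ne_zero i h1 hi)
  beta_ne_zero i h1 hi := by
    rw [hβt i h1 hi]
    exact mul_ne_zero (mul_ne_zero (hδ i h1 hi) (hγ _ (by lia))) (h.beta_ne_zero i h1 hi)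
  degree_lt i h1 hi := by
    have degree_eq (j : ℕ) (hj : j ≤ ℓ + 1) : (Rt j).degree = (R j).degree := by
      rw [hRt j hj, smul_eq_C_mul, degree_C_mul (inv_ne_zero (hγ j hj))]
    rw [degree_eq _ (by lia), degree_eq _ (by lia)]
    exact h.degree_lt i h1 hi
  smul_eq i h1 hi := by
    have smul_Rt (j : ℕ) (hj : j ≤ ℓ + 1) : γ j • Rt j = R j := by
      rw [hRt j hj, smul_inv_smul₀ (hγ j hj)]
    calc αt i • Rt (i - 1)
        = δ i • α i • γ (i - 1) • Rt (i - 1) := by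
          rw [hαt i h1 hi]; module
      _ = δ i • (Q i * γ i • Rt i + β i • γ (i + 1) • Rt (i + 1)) := by
          rw [smul_Rt _ (by lia), smul_Rt _ (by lia), smul_Rt _ (by lia), h.smul_eq i h1 hi]
      _ = (δ i * γ i) • Q i * Rt i + βt i • Rt (i + 1) := by
          rw [hβt i h1 hi, mul_smul_comm, smul_mul_assoc]; module

theorem IsSubresultantPsi.eq_of_forall_eq {d : ℕ → ℕ} {c c' ψ' : ℕ → K}
    (hψ : IsSubresultantPsi ℓ d c ψ) (hψ' : IsSubresultantPsi ℓ d c' ψ')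
    (hc : ∀ i, 1 ≤ i → i < ℓ → c i = c' i) {i : ℕ} (h1 : 1 ≤ i) (hi : i ≤ ℓ) : ψ i = ψ' i := by
  induction i, h1 using Nat.le_induction with
  | base => rw [hψ.one, hψ'.one]
  | succ n hn ih =>
    rw [hψ.eq_div _ (by lia) hi, hψ'.eq_div _ (by lia) hi, Nat.add_sub_cancel, hc n hn (by lia),
      ih (by lia)]

theorem stmt_12_general (h : IsSubresultantPRS_s12 ℓ R Q α β ψ)
    (hγ0 : γ 0 = 1) (hγ1 : γ 1 = 1) (hγ : ∀ i, i ≤ ℓ + 1 → γ i ≠ 0)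
    (hRt : ∀ i, i ≤ ℓ + 1 → Rt i = (γ i)⁻¹ • R i)
    (hαt : ∀ i, 1 ≤ i → i ≤ ℓ →
      αt i = (Rt i).leadingCoeff ^ ((R (i - 1)).natDegree - (R i).natDegree + 1))
    (hψt : IsSubresultantPsi ℓ (fun i => (R i).natDegree)
      (fun i => γ i * (Rt i).leadingCoeff) ψt)
    (hβt1 : βt 1 = (-1) ^ ((R 0).natDegree - (R 1).natDegree + 1) * γ 2)
    (hβt : ∀ i, 2 ≤ i → i ≤ ℓ →
      βt i = -(Rt (i - 1)).leadingCoeff * ψt i ^ ((R (i - 1)).natDegree - (R i).natDegree) /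
        γ i ^ ((R (i - 1)).natDegree - (R i).natDegree + 1) * γ (i + 1)) :
    ∃ Qt : ℕ → K[X], IsPRS ℓ Rt Qt αt βt := by
  have leadingCoeff_R (i : ℕ) (hi : i ≤ ℓ + 1) :
      (R i).leadingCoeff = γ i * (Rt i).leadingCoeff := by
    rw [hRt i hi, smul_eq_C_mul, leadingCoeff_mul, leadingCoeff_C, mul_inv_cancel_left₀ (hγ i hi)]
  have psi_eq (i : ℕ) (h1 : 1 ≤ i) (hi : i ≤ ℓ) : ψ i = ψt i :=
    h.psi.eq_of_forall_eq hψt (fun j _ hj => leadingCoeff_R j (by lia)) h1 hi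
  let δ (i : ℕ) : K := (γ i ^ ((R (i - 1)).natDegree - (R i).natDegree + 1) * γ (i - 1))⁻¹
  have hδ (i : ℕ) (_ : 1 ≤ i) (hi : i ≤ ℓ) : δ i ≠ 0 :=
    inv_ne_zero (mul_ne_zero (pow_ne_zero _ (hγ i (by lia))) (hγ (i - 1) (by lia)))
  have alphat_eq (i : ℕ) (h1 : 1 ≤ i) (hi : i ≤ ℓ) : αt i = δ i * γ (i - 1) * α i := by
    have hγi := hγ i (by lia)
    have hγpred := hγ (i - 1) (by lia)
    rw [hαt i h1 hi, h.alpha_eq i h1 hi, leadingCoeff_R i (by lia), mul_pow]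
    simp only [δ]
    field_simp
  have betat_eq (i : ℕ) (h1 : 1 ≤ i) (hi : i ≤ ℓ) : βt i = δ i * γ (i + 1) * β i := by
    obtain rfl | h2 := h1.eq_or_lt
    · simp [δ, hβt1, h.beta_one, hγ0, hγ1, mul_comm]
    · have hγi := hγ i (by lia)
      have hγpred := hγ (i - 1) (by lia)
      rw [hβt i h2 hi, h.beta_eq i h2 hi, psi_eq i h1 hi, leadingCoeff_R (i - 1) (by lia)]
      simp only [δ]
      field_simp
  exact ⟨_, h.rescale hγ hδ hRt alphat_eq betat_eq⟩

end Rescaling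

/-- Let `D` be a UFD with a normalized gcd and fraction field `K`, and
let `A, B ∈ D[x]` be nonzero with `deg A ≥ deg B ≥ 1`.  Let
`(R 0, R 1, …, R ℓ, R (ℓ+1) = 0)` be the subresultant PRS of `A` and `B` (with
quotients `Q i`, multipliers `α i`, `β i` given by the subresultant formulas via the
auxiliary sequence `ψ i`, degrees `d i = deg (R i)`, and all terms lying in `D[x]` as
witnessed by `R' i`).  Let `γ 0 = γ 1 = 1` and let `γ 2, …, γ (ℓ+1)` be arbitrary
nonzero scalars in `K`, and set `R̃ i := (γ i)⁻¹ • R i`.  Then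
`(R̃ 0, R̃ 1, …, R̃ ℓ, R̃ (ℓ+1) = 0)` is a PRS of `A` and `B` with the multipliers
`α̃ i`, `β̃ i` defined (via `ψ̃ i`) in the hypotheses below; that is, for each
`1 ≤ i ≤ ℓ` the scalars `α̃ i`, `β̃ i` are nonzero, the degrees descend, and there
exists `Q̃ i ∈ K[x]` with `α̃ i • R̃ (i-1) = Q̃ i * R̃ i + β̃ i • R̃ (i+1)`. -/
theorem stmt_12 {D : Type*} [CommRing D] [IsDomain D] [NormalizedGCDMonoid D]
    [UniqueFactorizationMonoid D]
    (A B : Polynomial D) (hA : A ≠ 0) (hB : B ≠ 0)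
    (hdeg : B.natDegree ≤ A.natDegree) (hB1 : 1 ≤ B.natDegree)
    -- the subresultant PRS `R 0 = A, R 1 = B, …, R ℓ ≠ 0, R (ℓ+1) = 0` of `A` and `B`
    -- over the fraction field `K` of `D`, with quotients `Q i`, scalars `α i, β i`,
    -- degrees `d i`, the auxiliary sequence `ψ i`, and terms `R' i` in `D[x]`
    (ℓ : ℕ) (R Q : ℕ → Polynomial (FractionRing D))
    (α β ψ : ℕ → FractionRing D)
    (R' : ℕ → Polynomial D) (d : ℕ → ℕ)
    (hR0 : R 0 = A.map (algebraMap D (FractionRing D)))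
    (hR1 : R 1 = B.map (algebraMap D (FractionRing D)))
    (hRne : ∀ i, i ≤ ℓ → R i ≠ 0)
    (hRlast : R (ℓ + 1) = 0)
    (hd : ∀ i, d i = (R i).natDegree)
    (hαne : ∀ i, 1 ≤ i → i ≤ ℓ → α i ≠ 0)
    (hβne : ∀ i, 1 ≤ i → i ≤ ℓ → β i ≠ 0)
    (hdesc : ∀ i, 1 ≤ i → i ≤ ℓ → (R (i + 1)).degree < (R i).degree)
    (hrec : ∀ i, 1 ≤ i → i ≤ ℓ → α i • R (i - 1) = Q i * R i + β i • R (i + 1))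
    (hα : ∀ i, 1 ≤ i → i ≤ ℓ → α i = (R i).leadingCoeff ^ (d (i - 1) - d i + 1))
    (hψ1 : ψ 1 = -1)
    (hψ : ∀ i, 2 ≤ i → i ≤ ℓ →
      ψ i = (-(R (i - 1)).leadingCoeff) ^ (d (i - 2) - d (i - 1)) /
        ψ (i - 1) ^ (d (i - 2) - d (i - 1) - 1))
    (hβ1 : β 1 = (-1) ^ (d 0 - d 1 + 1))
    (hβ : ∀ i, 2 ≤ i → i ≤ ℓ →
      β i = -(R (i - 1)).leadingCoeff * ψ i ^ (d (i - 1) - d i))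
    (hR' : ∀ i, i ≤ ℓ + 1 → (R' i).map (algebraMap D (FractionRing D)) = R i)
    -- the scaling factors `γ i` and the scaled sequence `R̃ i = (γ i)⁻¹ • R i`
    (γ : ℕ → FractionRing D) (hγ0 : γ 0 = 1) (hγ1 : γ 1 = 1)
    (hγne : ∀ i, i ≤ ℓ + 1 → γ i ≠ 0)
    (Rt : ℕ → Polynomial (FractionRing D))
    (hRt : ∀ i, i ≤ ℓ + 1 → Rt i = (γ i)⁻¹ • R i)
    -- the new multipliers `α̃ i`, `β̃ i` and the auxiliary sequence `ψ̃ i`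
    (αt βt ψt : ℕ → FractionRing D)
    (hαt : ∀ i, 1 ≤ i → i ≤ ℓ →
      αt i = (Rt i).leadingCoeff ^ (d (i - 1) - d i + 1))
    (hψt1 : ψt 1 = -1)
    (hψt : ∀ i, 2 ≤ i → i ≤ ℓ →
      ψt i = (-(γ (i - 1) * (Rt (i - 1)).leadingCoeff)) ^ (d (i - 2) - d (i - 1)) /
        ψt (i - 1) ^ (d (i - 2) - d (i - 1) - 1))
    (hβt1 : βt 1 = (-1) ^ (d 0 - d 1 + 1) * γ 2)
    (hβt : ∀ i, 2 ≤ i → i ≤ ℓ →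
      βt i = -(Rt (i - 1)).leadingCoeff * ψt i ^ (d (i - 1) - d i) /
        γ i ^ (d (i - 1) - d i + 1) * γ (i + 1)) :
    ∀ i, 1 ≤ i → i ≤ ℓ →
      αt i ≠ 0 ∧ βt i ≠ 0 ∧ (Rt (i + 1)).degree < (Rt i).degree ∧
      ∃ Qt : Polynomial (FractionRing D),
        αt i • Rt (i - 1) = Qt * Rt i + βt i • Rt (i + 1) := by
  intro i h1 hi
  obtain rfl : d = fun i => (R i).natDegree := funext hd
  have hsub : IsSubresultantPRS_s12 ℓ R Q α β ψ :=
    ⟨⟨hRne, hRlast, hαne, hβne, hdesc, hrec⟩, hα, ⟨hψ1, hψ⟩, hβ1, hβ⟩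
  obtain ⟨Qt, hPRS⟩ :=
    stmt_12_general hsub hγ0 hγ1 hγne hRt hαt ⟨hψt1, hψt⟩ hβt1 hβt
  exact ⟨hPRS.alpha_ne_zero i h1 hi, hPRS.beta_ne_zero i h1 hi, hPRS.degree_lt i h1 hi,
    Qt i, hPRS.smul_eq i h1 hi⟩
end
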